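/- There exists a constant a₁ > 0 such that for every smooth ℤ²-periodic real-valued eigenfunction ψ : ℝ² → ℝ of the Euclidean Laplacian with eigenvalue λ ≥ 1, every nodal domain Ω of ψ satisfies in(Ω) ≥ a₁ λ^{-1/2}. -/

import Mathlib

open MeasureTheory Metric Filter Real

noncomputable section

/-- `ψ : ℝⁿ → ℝ` is `ℤⁿ`-periodic: `ψ (x + v) = ψ x` for every integer vector `v`. -/
def ZnPeriodic (n : ℕ) (ψ : EuclideanSpace ℝ (Fin n) → ℝ) : Prop :=
  ∀ (x : EuclideanSpace ℝ (Fin n)) (v : Fin n → ℤ),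
    ψ (show EuclideanSpace ℝ (Fin n) from WithLp.toLp 2 fun i => x i + (v i : ℝ)) = ψ x

/-- The Euclidean Laplacian `Δψ = ∑ᵢ ∂²ψ/∂xᵢ²`. -/
def lap (n : ℕ) (ψ : EuclideanSpace ℝ (Fin n) → ℝ) (x : EuclideanSpace ℝ (Fin n)) : ℝ :=
  ∑ i : Fin n,
    fderiv ℝ (fun y => fderiv ℝ ψ y (EuclideanSpace.single i (1:ℝ))) x
      (EuclideanSpace.single i (1:ℝ))

/-- `Ω` is a nodal domain of `ψ`: a connected component of `{ψ ≠ 0}`. -/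
def IsNodalDomain {n : ℕ} (ψ : EuclideanSpace ℝ (Fin n) → ℝ)
    (Ω : Set (EuclideanSpace ℝ (Fin n))) : Prop :=
  ∃ x, ψ x ≠ 0 ∧ Ω = connectedComponentIn {y | ψ y ≠ 0} x

/-- The inner radius of a set: the supremum of radii of open balls contained in it. -/
def innerRadius {n : ℕ} (Ω : Set (EuclideanSpace ℝ (Fin n))) : ℝ :=
  sSup {ρ : ℝ | 0 < ρ ∧ ∃ c, Metric.ball c ρ ⊆ Ω}

/-- The fundamental domain `[0,1)ⁿ` of the torus `ℝⁿ/ℤⁿ`. -/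
def fundDom (n : ℕ) : Set (EuclideanSpace ℝ (Fin n)) :=
  {x | ∀ i, x i ∈ Set.Ico (0:ℝ) 1}

/-- `S ⊆ ℕ` has full density: `#(S ∩ [1,N]) / N → 1`. -/
def FullDensity (S : Set ℕ) : Prop :=
  Filter.Tendsto (fun N => (Nat.card ↥(S ∩ Set.Icc 1 N) : ℝ) / N) Filter.atTop (nhds 1)


theorem hasDerivAt_mul_chi {q χ : ℝ → ℝ} {q' s : ℝ} (hq : HasDerivAt q q' s)
    (hχ : ∀ y, |χ y| ≤ 1)
    (h : (q s = 0 ∧ q' = 0) ∨ ∀ᶠ y in nhds s, χ y = χ s) :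
    HasDerivAt (fun y => q y * χ y) (q' * χ s) s := by
  rcases h with ⟨h0, h1⟩ | h
  · subst h1
    rw [zero_mul]
    rw [hasDerivAt_iff_isLittleO] at hq ⊢
    simp only [h0, sub_zero, smul_zero, zero_mul] at hq ⊢
    refine Asymptotics.IsBigO.trans_isLittleO ?_ hq
    apply Asymptotics.IsBigO.of_bound 1
    filter_upwards with y
    rw [norm_mul, one_mul]
    have := hχ y
    rw [← Real.norm_eq_abs] at this
    exact mul_le_of_le_one_right (norm_nonneg _) this
  · refine (hq.mul_const (χ s)).congr_of_eventuallyEq ?_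
    filter_upwards [h] with y hy
    rw [hy]

theorem continuous_mul_chi {X : Type*} [TopologicalSpace X] {q χ : X → ℝ} (hq : Continuous q)
    (hχ : ∀ y, |χ y| ≤ 1)
    (h : ∀ s, q s = 0 ∨ ∀ᶠ y in nhds s, χ y = χ s) :
    Continuous (fun y => q y * χ y) := by
  rw [continuous_iff_continuousAt]
  intro s
  rcases h s with h0 | h
  · unfold ContinuousAt; beta_reduce
    rw [h0, zero_mul]
    have hq' : Tendsto q (nhds s) (nhds 0) := by rw [← h0]; exact hq.continuousAt
    rw [tendsto_zero_iff_norm_tendsto_zero] at hq' ⊢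
    refine squeeze_zero (fun _ => norm_nonneg _) (fun y => ?_) hq'
    rw [norm_mul]
    have := hχ y
    rw [← Real.norm_eq_abs] at this
    exact mul_le_of_le_one_right (norm_nonneg _) this
  · refine ContinuousAt.congr (f := fun y => q y * χ s) (by fun_prop) ?_
    filter_upwards [h] with y hy
    rw [hy]

theorem hasDerivAt_intInt (f f' : ℝ × ℝ → ℝ) (hf : Continuous f) (hf' : Continuous f')
    (h : ∀ t θ, HasDerivAt (fun t => f (t, θ)) (f' (t, θ)) t) (a b t : ℝ) :
    HasDerivAt (fun t => ∫ θ in a..b, f (t, θ)) (∫ θ in a..b, f' (t, θ)) t := by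
  have hc : IsCompact ((Set.Icc (t-1) (t+1)) ×ˢ (Set.uIcc a b)) := isCompact_Icc.prod isCompact_uIcc
  obtain ⟨C, hC⟩ := hc.exists_bound_of_continuousOn hf'.continuousOn
  refine (intervalIntegral.hasDerivAt_integral_of_dominated_loc_of_deriv_le
    (F := fun t θ => f (t, θ)) (F' := fun t θ => f' (t,θ)) (bound := fun _ => C)
    (s := Set.Icc (t-1) (t+1)) (Icc_mem_nhds (by linarith) (by linarith)) ?_ ?_ ?_ ?_ ?_ ?_).2
  · filter_upwards with x
    exact (by fun_prop : Continuous fun θ => f (x, θ)).aestronglyMeasurable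
  · exact (by fun_prop : Continuous fun θ => f (t, θ)).intervalIntegrable _ _
  · exact (by fun_prop : Continuous fun θ => f' (t, θ)).aestronglyMeasurable
  · filter_upwards with θ hθ x hx
    exact hC (x, θ) ⟨hx, Set.uIoc_subset_uIcc hθ⟩
  · simp
  · filter_upwards with θ hθ x hx
    exact h x θ

theorem mono_of_deriv (f f' : ℝ → ℝ) (h : ∀ t, HasDerivAt f (f' t) t) (a b : ℝ) (hab : a ≤ b)
    (h0 : ∀ t, a ≤ t → t ≤ b → 0 ≤ f' t) : f a ≤ f b := by
  have : MonotoneOn f (Set.Icc a b) := by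
    apply monotoneOn_of_deriv_nonneg (convex_Icc a b)
    · exact fun x _ => (h x).continuousAt.continuousWithinAt
    · exact fun x _ => (h x).differentiableAt.differentiableWithinAt
    · intro x hx
      rw [interior_Icc] at hx
      rw [(h x).deriv]
      exact h0 x hx.1.le hx.2.le
  exact this (Set.left_mem_Icc.2 hab) (Set.right_mem_Icc.2 hab) hab

theorem hasDerivAt_exp2 (t : ℝ) : HasDerivAt (fun t => Real.exp (2*t)) (2 * Real.exp (2*t)) t := by
  have := ((hasDerivAt_id t).const_mul 2).exp
  simpa [mul_comm] using this

theorem ode_lemma (B B1 B2 : ℝ → ℝ) (K lam κ τ T0 : ℝ)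
    (hB : ∀ t, HasDerivAt B (B1 t) t) (hB1 : ∀ t, HasDerivAt B1 (B2 t) t)
    (hK : 0 < K) (hl : 0 < lam) (hκ : 0 < κ) 
    (hBK : ∀ t, B t ≤ K)
    (h1 : ∀ t, -4 * lam * Real.exp (2*t) * B t ≤ B2 t)
    (h2 : ∀ t, τ ≤ t → t ≤ T0 → -4 * lam * Real.exp (2*t) * B t + κ * B t ≤ B2 t)
    (hlim : ∀ δ > 0, ∃ T, ∀ t ≤ T, K - δ ≤ B t)
    (hT : 2 * lam * Real.exp (2*T0) = 1) (hτ : τ ≤ T0) : κ * (T0 - τ)^2 ≤ 2 := by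
  have hneg : ∀ t, -4 * lam * Real.exp (2*t) * K ≤ -4 * lam * Real.exp (2*t) * B t := by
    intro t
    have := mul_le_mul_of_nonneg_left (hBK t) (by positivity : 0 ≤ 4 * lam * Real.exp (2*t))
    linarith
  -- first integral
  have hd1 : ∀ t, HasDerivAt (fun t => B1 t + 2 * lam * K * Real.exp (2*t))
      (B2 t + 2 * lam * K * (2 * Real.exp (2*t))) t := fun t =>
    (hB1 t).add ((hasDerivAt_exp2 t).const_mul _)
  have hd0 : ∀ t, HasDerivAt (fun t => B t + lam * K * Real.exp (2*t))
      (B1 t + lam * K * (2 * Real.exp (2*t))) t := fun t =>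
    (hB t).add ((hasDerivAt_exp2 t).const_mul _)
  have m1 : ∀ a b, a ≤ b → B1 a + 2 * lam * K * Real.exp (2*a) ≤ B1 b + 2 * lam * K * Real.exp (2*b) := by
    intro a b hab
    refine mono_of_deriv _ _ hd1 a b hab ?_
    intro t _ _
    have := h1 t; have := hneg t
    nlinarith
  have pos1 : ∀ t, 0 ≤ B1 t + 2 * lam * K * Real.exp (2*t) := by
    intro t
    by_contra hc
    push Not at hc
    obtain ⟨T, hTT⟩ := hlim 1 one_pos
    set c := -(B1 t + 2 * lam * K * Real.exp (2*t)) with hcdef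
    have hcpos : 0 < c := by linarith
    -- for a ≤ t : B a + .. ≥ B t + ... + c (t-a)
    have key : ∀ a ≤ t, B t + lam * K * Real.exp (2*t) + c * t ≤ B a + lam * K * Real.exp (2*a) + c * a := by
      intro a ha
      have := mono_of_deriv (fun s => -(B s + lam * K * Real.exp (2*s) + c * s))
        (fun s => -(B1 s + lam * K * (2 * Real.exp (2*s)) + c)) (fun s => by
          have := ((hd0 s).add ((hasDerivAt_id s).const_mul c)).neg
          exact this.congr_deriv (by simp)) a t ha (by
          intro s _ hs
          have := m1 s t hs
          nlinarith)
      linarith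
    set Q := B t + lam * K * Real.exp (2*t) + c * t with hQ
    set a := min t ((Q - K - lam*K*Real.exp (2*t) - 1)/c) with ha
    have ha1 : a ≤ t := min_le_left _ _
    have ha2 : a * c ≤ Q - K - lam*K*Real.exp (2*t) - 1 := by
      rw [← le_div_iff₀ hcpos]; exact min_le_right _ _
    have hk := key a ha1
    have := hBK a
    have : Real.exp (2*a) ≤ Real.exp (2*t) := Real.exp_le_exp.2 (by linarith)
    have := mul_le_mul_of_nonneg_left this (by positivity : 0 ≤ lam * K)
    linarith
  have low : ∀ t, K ≤ B t + lam * K * Real.exp (2*t) := by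
    intro t
    apply le_of_forall_pos_sub_le
    intro δ hδ
    obtain ⟨T, hTT⟩ := hlim δ hδ
    have h3 := mono_of_deriv _ _ hd0 (min t T) t (min_le_left _ _) (by
      intro s _ _
      have := pos1 s
      linarith)
    have h4 := hTT (min t T) (min_le_right _ _)
    have : 0 ≤ lam * K * Real.exp (2 * min t T) := by positivity
    linarith
  have half : ∀ t ≤ T0, K / 2 ≤ B t := by
    intro t ht
    have := low t
    have : Real.exp (2*t) ≤ Real.exp (2*T0) := Real.exp_le_exp.2 (by linarith)
    have := mul_le_mul_of_nonneg_left this (by positivity : 0 ≤ lam * K)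
    nlinarith
  have s1 : ∀ t, τ ≤ t → t ≤ T0 → κ * K / 2 * (t - τ) ≤ B1 t + 2 * lam * K * Real.exp (2*t) := by
    intro t ht1 ht2
    have := mono_of_deriv (fun s => B1 s + 2 * lam * K * Real.exp (2*s) - κ*K/2 * s)
      (fun s => B2 s + 2 * lam * K * (2 * Real.exp (2*s)) - κ*K/2) (fun s => by
        have := (hd1 s).sub ((hasDerivAt_id s).const_mul (κ*K/2))
        exact this.congr_deriv (by simp)) τ t ht1 (by
        intro s hs1 hs2
        have e1 := h2 s hs1 (hs2.trans ht2)
        have e2 := hneg s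
        have e3 := mul_le_mul_of_nonneg_left (half s (hs2.trans ht2)) hκ.le
        linarith)
    have := pos1 τ
    linarith
  have s2 := mono_of_deriv (fun s => B s + lam * K * Real.exp (2*s) - κ*K/4 * (s-τ)^2)
      (fun s => B1 s + lam * K * (2 * Real.exp (2*s)) - κ*K/4 * (2 * (s-τ))) (fun s => by
        have := (hd0 s).sub ((((hasDerivAt_id s).sub_const τ).pow 2).const_mul (κ*K/4))
        exact this.congr_deriv (by simp)) τ T0 hτ (by
        intro s hs1 hs2
        have := s1 s hs1 hs2
        linarith)
  have := low τ
  have := hBK T0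
  have e : lam * K * Real.exp (2*T0) = K/2 := by
    linear_combination K/2 * hT
  rw [e] at s2
  have : K * (κ * (T0-τ)^2) ≤ K * 2 := by nlinarith
  exact le_of_mul_le_mul_left this hK

theorem cyl_lemma (p pt ptt pq pqq χ : ℝ × ℝ → ℝ) (lam m τ T0 : ℝ)
    (cp : Continuous p) (cpt : Continuous pt) (cptt : Continuous ptt) (cpq : Continuous pq)
    (cpqq : Continuous pqq)
    (dt : ∀ t θ, HasDerivAt (fun t => p (t, θ)) (pt (t, θ)) t)
    (dtt : ∀ t θ, HasDerivAt (fun t => pt (t, θ)) (ptt (t, θ)) t)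
    (dq : ∀ t θ, HasDerivAt (fun θ => p (t, θ)) (pq (t, θ)) θ)
    (dqq : ∀ t θ, HasDerivAt (fun θ => pq (t, θ)) (pqq (t, θ)) θ)
    (hχ : ∀ z, χ z = 0 ∨ χ z = 1)
    (hloc : ∀ z, p z = 0 ∨ ∀ᶠ w in nhds z, χ w = χ z)
    (perp : ∀ t, p (t, 2*π) = p (t, 0)) (perq : ∀ t, pq (t, 2*π) = pq (t, 0))
    (perχ : ∀ t, χ (t, 2*π) = χ (t, 0))
    (pde : ∀ t θ, ptt (t, θ) + pqq (t, θ) = - lam * Real.exp (2*t) * p (t, θ))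
    (hm : 0 < m) (hl : 0 < lam)
    (hbd : ∀ z, p z ^ 4 * χ z ≤ m)
    (hlim : ∀ δ > 0, ∃ T, ∀ t ≤ T, ∀ θ, m - δ ≤ p (t, θ) ^ 4 * χ (t, θ))
    (hvan : ∀ t, τ ≤ t → t ≤ T0 → ∃ θ ∈ Set.Icc 0 (2*π), χ (t, θ) = 0)
    (hT : 2 * lam * Real.exp (2*T0) = 1) (hτ : τ ≤ T0) :
    3 * (T0 - τ)^2 ≤ 32 * π^2 := by
  have hpi := Real.pi_pos
  have hχ1 : ∀ z, |χ z| ≤ 1 := by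
    intro z; rcases hχ z with h | h <;> rw [h] <;> norm_num
  have hχ0 : ∀ z, 0 ≤ χ z := by
    intro z; rcases hχ z with h | h <;> rw [h]; norm_num
  have loct : ∀ t θ, p (t, θ) = 0 ∨ ∀ᶠ s in nhds t, χ (s, θ) = χ (t, θ) := by
    intro t θ
    refine (hloc (t, θ)).imp id fun h => ?_
    exact ((by fun_prop : Continuous fun s : ℝ => (s, θ)).tendsto t).eventually h
  have locq : ∀ t θ, p (t, θ) = 0 ∨ ∀ᶠ s in nhds θ, χ (t, s) = χ (t, θ) := by
    intro t θ
    refine (hloc (t, θ)).imp id fun h => ?_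
    exact ((by fun_prop : Continuous fun s : ℝ => (t, s)).tendsto θ).eventually h
  set H : ℝ × ℝ → ℝ := fun z => p z ^ 4 * χ z with hH
  set Ht : ℝ × ℝ → ℝ := fun z => (4 * p z ^ 3 * pt z) * χ z with hHt
  set Htt : ℝ × ℝ → ℝ := fun z => (4 * p z ^ 3 * ptt z + 12 * p z ^ 2 * pt z ^ 2) * χ z with hHtt
  set Hq : ℝ × ℝ → ℝ := fun z => (4 * p z ^ 3 * pq z) * χ z with hHq
  set Hqq : ℝ × ℝ → ℝ := fun z => (4 * p z ^ 3 * pqq z + 12 * p z ^ 2 * pq z ^ 2) * χ z with hHqq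
  set D : ℝ × ℝ → ℝ := fun z => (p z ^ 2 * pq z ^ 2) * χ z with hD
  have cH : Continuous H := continuous_mul_chi (by fun_prop) hχ1 fun z =>
    (hloc z).imp (fun h => by rw [h]; ring) id
  have cHt : Continuous Ht := continuous_mul_chi (by fun_prop) hχ1 fun z =>
    (hloc z).imp (fun h => by rw [h]; ring) id
  have cHtt : Continuous Htt := continuous_mul_chi (by fun_prop) hχ1 fun z =>
    (hloc z).imp (fun h => by rw [h]; ring) id
  have cHq : Continuous Hq := continuous_mul_chi (by fun_prop) hχ1 fun z =>
    (hloc z).imp (fun h => by rw [h]; ring) id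
  have cHqq : Continuous Hqq := continuous_mul_chi (by fun_prop) hχ1 fun z =>
    (hloc z).imp (fun h => by rw [h]; ring) id
  have cD : Continuous D := continuous_mul_chi (by fun_prop) hχ1 fun z =>
    (hloc z).imp (fun h => by rw [h]; ring) id
  have dH : ∀ t θ, HasDerivAt (fun t => H (t, θ)) (Ht (t, θ)) t := by
    intro t θ
    refine hasDerivAt_mul_chi (q := fun t => p (t, θ)^4) (χ := fun t => χ (t, θ)) ?_ (fun _ => hχ1 _)
      ((loct t θ).imp (fun h => by simp [h]) id)
    exact ((dt t θ).pow 4).congr_deriv (by push_cast; ring)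
  have dHt : ∀ t θ, HasDerivAt (fun t => Ht (t, θ)) (Htt (t, θ)) t := by
    intro t θ
    refine hasDerivAt_mul_chi (q := fun t => 4 * p (t, θ)^3 * pt (t, θ)) (χ := fun t => χ (t, θ)) ?_ (fun _ => hχ1 _)
      ((loct t θ).imp (fun h => by simp [h]) id)
    exact ((((dt t θ).pow 3).const_mul 4).mul (dtt t θ)).congr_deriv (by simp; ring)
  have dHq : ∀ t θ, HasDerivAt (fun θ => H (t, θ)) (Hq (t, θ)) θ := by
    intro t θ
    refine hasDerivAt_mul_chi (q := fun θ => p (t, θ)^4) (χ := fun θ => χ (t, θ)) ?_ (fun _ => hχ1 _)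
      ((locq t θ).imp (fun h => by simp [h]) id)
    exact ((dq t θ).pow 4).congr_deriv (by push_cast; ring)
  have dHqq : ∀ t θ, HasDerivAt (fun θ => Hq (t, θ)) (Hqq (t, θ)) θ := by
    intro t θ
    refine hasDerivAt_mul_chi (q := fun θ => 4 * p (t, θ)^3 * pq (t, θ)) (χ := fun θ => χ (t, θ)) ?_ (fun _ => hχ1 _)
      ((locq t θ).imp (fun h => by simp [h]) id)
    exact ((((dq t θ).pow 3).const_mul 4).mul (dqq t θ)).congr_deriv (by simp; ring)
  have slice : ∀ (f : ℝ × ℝ → ℝ), Continuous f → ∀ t a b,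
      IntervalIntegrable (fun θ => f (t, θ)) volume a b := fun f hf t a b =>
    (by fun_prop : Continuous fun θ => f (t, θ)).intervalIntegrable a b
  have h2pi : (0:ℝ) ≤ 2*π := by positivity
  have zeroq : ∀ t, ∫ θ in (0:ℝ)..(2*π), Hqq (t, θ) = 0 := by
    intro t
    rw [intervalIntegral.integral_eq_sub_of_hasDerivAt (fun θ _ => dHqq t θ) (slice _ cHqq _ _ _)]
    simp only [hHq, perp, perq, perχ, sub_self]
  have B2eq : ∀ t, (∫ θ in (0:ℝ)..(2*π), Htt (t, θ)) = ∫ θ in (0:ℝ)..(2*π), (Htt (t, θ) + Hqq (t, θ)) := by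
    intro t
    rw [intervalIntegral.integral_add (slice _ cHtt _ _ _) (slice _ cHqq _ _ _), zeroq, add_zero]
  have B2ge : ∀ t, -4 * lam * Real.exp (2*t) * (∫ θ in (0:ℝ)..(2*π), H (t, θ))
      + 12 * (∫ θ in (0:ℝ)..(2*π), D (t, θ)) ≤ ∫ θ in (0:ℝ)..(2*π), Htt (t, θ) := by
    intro t
    rw [B2eq, ← intervalIntegral.integral_const_mul, ← intervalIntegral.integral_const_mul,
      ← intervalIntegral.integral_add ((slice _ cH _ _ _).const_mul _) ((slice _ cD _ _ _).const_mul _)]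
    refine intervalIntegral.integral_mono_on h2pi
      (((slice _ cH _ _ _).const_mul _).add ((slice _ cD _ _ _).const_mul _))
      ((slice _ cHtt _ _ _).add (slice _ cHqq _ _ _)) ?_
    intro θ _
    have e : Htt (t, θ) + Hqq (t, θ) = -4 * lam * Real.exp (2*t) * H (t, θ) + 12 * D (t, θ)
        + 12 * (p (t, θ) ^ 2 * pt (t, θ) ^ 2 * χ (t, θ)) := by
      simp only [hHtt, hHqq, hH, hD]
      linear_combination 4 * p (t, θ)^3 * χ (t, θ) * pde t θ
    rw [e]
    have := mul_nonneg (by positivity : 0 ≤ p (t, θ) ^ 2 * pt (t, θ) ^ 2) (hχ0 (t, θ))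
    linarith
  have Dnn : ∀ t, 0 ≤ ∫ θ in (0:ℝ)..(2*π), D (t, θ) := fun t =>
    intervalIntegral.integral_nonneg h2pi fun θ _ => mul_nonneg (by positivity) (hχ0 _)
  have poinc : ∀ t, τ ≤ t → t ≤ T0 → (∫ θ in (0:ℝ)..(2*π), H (t, θ)) ≤ 64 * π^2 * ∫ θ in (0:ℝ)..(2*π), D (t, θ) := by
    intro t h1 h2
    obtain ⟨θ₀, hθ₀, hz⟩ := hvan t h1 h2
    set I := (∫ θ in (0:ℝ)..(2*π), H (t, θ)) with hI
    set J := (∫ θ in (0:ℝ)..(2*π), D (t, θ)) with hJ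
    have pw : ∀ θ ∈ Set.Icc 0 (2*π), H (t, θ) ≤ 1/(4*π) * I + 16 * π * J := by
      intro θ hθ
      have e1 : H (t, θ) = ∫ s in θ₀..θ, Hq (t, s) := by
        rw [intervalIntegral.integral_eq_sub_of_hasDerivAt (fun θ _ => dHq t θ) (slice _ cHq _ _ _)]
        simp [hH, hz]
      have e2 : |∫ s in θ₀..θ, Hq (t, s)| ≤ ∫ s in (0:ℝ)..(2*π), |Hq (t, s)| := by
        have nn : 0 ≤ᵐ[volume.restrict (Set.Ioc 0 (2*π))] fun s => |Hq (t, s)| :=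
          Filter.Eventually.of_forall fun s => abs_nonneg _
        rcases le_total θ₀ θ with hle | hle
        · exact (intervalIntegral.abs_integral_le_integral_abs hle).trans
            (intervalIntegral.integral_mono_interval hθ₀.1 hle hθ.2 nn (slice _ cHq _ _ _).abs)
        · rw [intervalIntegral.integral_symm, abs_neg]
          exact (intervalIntegral.abs_integral_le_integral_abs hle).trans
            (intervalIntegral.integral_mono_interval hθ.1 hle hθ₀.2 nn (slice _ cHq _ _ _).abs)
      have e3 : (∫ s in (0:ℝ)..(2*π), |Hq (t, s)|) ≤ ∫ s in (0:ℝ)..(2*π), (1/(4*π) * H (t, s) + 16 * π * D (t, s)) := by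
        refine intervalIntegral.integral_mono_on h2pi (slice _ cHq _ _ _).abs
          (((slice _ cH _ _ _).const_mul _).add ((slice _ cD _ _ _).const_mul _)) ?_
        intro s _
        simp only [hHq, hH, hD]
        rw [abs_mul, abs_of_nonneg (hχ0 (t, s)), ← mul_assoc, ← mul_assoc, ← add_mul]
        refine mul_le_mul_of_nonneg_right ?_ (hχ0 _)
        rw [abs_le]
        have k1 : 1/(4*π) * p (t, s) ^ 4 + 16 * π * (p (t, s) ^ 2 * pq (t, s) ^ 2) - 4 * p (t, s)^3 * pq (t, s)
          = 1/(4*π) * (p (t, s)^2 - 8 * π * p (t, s) * pq (t, s))^2 := by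
          field_simp; ring
        have k2 : 1/(4*π) * p (t, s) ^ 4 + 16 * π * (p (t, s) ^ 2 * pq (t, s) ^ 2) + 4 * p (t, s)^3 * pq (t, s)
          = 1/(4*π) * (p (t, s)^2 + 8 * π * p (t, s) * pq (t, s))^2 := by
          field_simp; ring
        have k3 : 0 ≤ 1/(4*π) * (p (t, s)^2 - 8 * π * p (t, s) * pq (t, s))^2 := by positivity
        have k4 : 0 ≤ 1/(4*π) * (p (t, s)^2 + 8 * π * p (t, s) * pq (t, s))^2 := by positivity
        constructor <;> linarith
      rw [intervalIntegral.integral_add ((slice _ cH _ _ _).const_mul _) ((slice _ cD _ _ _).const_mul _),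
        intervalIntegral.integral_const_mul, intervalIntegral.integral_const_mul] at e3
      calc H (t, θ) ≤ |∫ s in θ₀..θ, Hq (t, s)| := by rw [e1]; exact le_abs_self _
        _ ≤ _ := e2.trans e3
    have e4 := intervalIntegral.integral_mono_on h2pi (slice _ cH t _ _) (_root_.intervalIntegrable_const) pw
    rw [intervalIntegral.integral_const, smul_eq_mul, ← hI] at e4
    have e5 : (2 * π - 0) * (1/(4*π) * I + 16 * π * J) = I / 2 + 32 * π^2 * J := by
      field_simp; ring
    rw [e5] at e4
    linarith
  have fin := ode_lemma (fun t => ∫ θ in (0:ℝ)..(2*π), H (t, θ)) (fun t => ∫ θ in (0:ℝ)..(2*π), Ht (t, θ))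
    (fun t => ∫ θ in (0:ℝ)..(2*π), Htt (t, θ)) (2*π*m) lam (3/(16*π^2)) τ T0
    (hasDerivAt_intInt H Ht cH cHt dH _ _) (hasDerivAt_intInt Ht Htt cHt cHtt dHt _ _)
    (by positivity) hl (by positivity) ?_ ?_ ?_ ?_ hT hτ
  · rw [div_mul_eq_mul_div, div_le_iff₀ (by positivity)] at fin
    linarith
  · intro t
    have := intervalIntegral.integral_mono_on h2pi (slice _ cH t _ _) (_root_.intervalIntegrable_const) (fun θ _ => hbd (t, θ))
    rw [intervalIntegral.integral_const, smul_eq_mul] at this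
    linarith
  · intro t
    have := B2ge t; have := Dnn t
    linarith
  · intro t h1 h2
    have := B2ge t; have h3 := poinc t h1 h2
    have : 3/(16*π^2) * (∫ θ in (0:ℝ)..(2*π), H (t, θ)) ≤ 12 * ∫ θ in (0:ℝ)..(2*π), D (t, θ) := by
      calc _ ≤ 3/(16*π^2) * (64 * π^2 * ∫ θ in (0:ℝ)..(2*π), D (t, θ)) :=
            mul_le_mul_of_nonneg_left h3 (by positivity)
        _ = _ := by field_simp; ring
    linarith
  · intro δ hδ
    obtain ⟨T, hTT⟩ := hlim (δ/(2*π)) (by positivity)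
    refine ⟨T, fun t ht => ?_⟩
    have := intervalIntegral.integral_mono_on h2pi (_root_.intervalIntegrable_const) (slice _ cH t _ _) (fun θ _ => hTT t ht θ)
    rw [intervalIntegral.integral_const, smul_eq_mul] at this
    have e : (2*π - 0) * (m - δ/(2*π)) = 2*π*m - δ := by field_simp; ring
    rw [e] at this
    exact this

theorem second_deriv_test (f f' : ℝ → ℝ) (c : ℝ) (h : ∀ s, HasDerivAt f (f' s) s)
    (h' : HasDerivAt f' c 0) (hm : IsLocalMin f 0) : 0 ≤ c := by
  by_contra hc
  push Not at hc
  have hd : deriv f = f' := funext fun s => (h s).deriv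
  have hmax : IsLocalMax f 0 := by
    apply isLocalMax_of_deriv_deriv_neg
    · rw [hd, h'.deriv]; exact hc
    · exact hm.deriv_eq_zero
    · exact (h 0).continuousAt
  have hcst : ∀ᶠ y in nhds (0:ℝ), f y = f 0 := by
    filter_upwards [hm, hmax] with y h1 h2
    exact le_antisymm h2 h1
  have h0 : ∀ᶠ y in nhds (0:ℝ), f' y = 0 := by
    filter_upwards [hcst.eventually_nhds] with y hy
    have : HasDerivAt f 0 y := (hasDerivAt_const y (f 0)).congr_of_eventuallyEq hy
    exact (h y).unique this
  have : HasDerivAt f' 0 0 := (hasDerivAt_const (0:ℝ) (0:ℝ)).congr_of_eventuallyEq h0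
  exact hc.ne (h'.unique this)

theorem partial_contDiff {ψ : EuclideanSpace ℝ (Fin 2) → ℝ} (hψ : ContDiff ℝ (⊤ : ℕ∞) ψ)
    (v : EuclideanSpace ℝ (Fin 2)) : ContDiff ℝ (⊤ : ℕ∞) (fun y => fderiv ℝ ψ y v) :=
  (hψ.fderiv_right (m := (⊤ : ℕ∞)) (by norm_cast)).clm_apply contDiff_const

theorem line_deriv {f : EuclideanSpace ℝ (Fin 2) → ℝ} (hf : ContDiff ℝ (⊤ : ℕ∞) f)
    (p v : EuclideanSpace ℝ (Fin 2)) (s : ℝ) :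
    HasDerivAt (fun s : ℝ => f (p + s • v)) (fderiv ℝ f (p + s • v) v) s := by
  have h1 : HasDerivAt (fun s : ℝ => p + s • v) v s := by
    simpa using ((hasDerivAt_id s).smul_const v).const_add p
  exact ((hf.differentiable (by simp)) _).hasFDerivAt.comp_hasDerivAt s h1

theorem lap_test {ψ : EuclideanSpace ℝ (Fin 2) → ℝ} (hψ : ContDiff ℝ (⊤ : ℕ∞) ψ) (k : ℝ)
    (x₀ p : EuclideanSpace ℝ (Fin 2)) (hm : IsLocalMin (fun x => ψ x + k * ‖x - x₀‖^2) p) :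
    0 ≤ lap 2 ψ p + 4 * k := by
  have key : ∀ i : Fin 2, 0 ≤ fderiv ℝ (fun y => fderiv ℝ ψ y (EuclideanSpace.single i (1:ℝ))) p
      (EuclideanSpace.single i (1:ℝ)) + 2 * k := by
    intro i
    set e : EuclideanSpace ℝ (Fin 2) := EuclideanSpace.single i (1:ℝ) with he
    have hen : ‖e‖ = 1 := by simp [he]
    have hsq : ∀ s : ℝ, ‖p + s • e - x₀‖^2 = ‖p - x₀‖^2 + 2 * s * inner ℝ (p - x₀) e + s^2 := by
      intro s
      rw [show p + s • e - x₀ = (p - x₀) + s • e by abel, norm_add_sq_real, norm_smul, hen,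
        inner_smul_right]
      simp; ring
    refine second_deriv_test (fun s => ψ (p + s • e) + k * ‖p + s • e - x₀‖^2)
      (fun s => fderiv ℝ ψ (p + s • e) e + k * (2 * inner ℝ (p - x₀) e + 2 * s)) _ ?_ ?_ ?_
    · intro s
      refine (line_deriv hψ p e s).add ?_
      simp only [hsq]
      have := ((((((hasDerivAt_id s).const_mul 2).mul_const (inner ℝ (p - x₀) e)).const_add
        (‖p - x₀‖^2))).add ((hasDerivAt_id s).pow 2)).const_mul k
      exact this.congr_deriv (by simp)
    · have h1 := line_deriv (partial_contDiff hψ e) p e 0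
      have h2 : HasDerivAt (fun s : ℝ => k * (2 * inner ℝ (p - x₀) e + 2 * s)) (k * 2) 0 := by
        have := (((hasDerivAt_id (0:ℝ)).const_mul 2).const_add (2 * inner ℝ (p - x₀) e)).const_mul k
        exact this.congr_deriv (by simp)
      exact (h1.add h2).congr_deriv (by simp [mul_comm])
    · have hc : Tendsto (fun s : ℝ => p + s • e) (nhds 0) (nhds p) := by
        have : Continuous (fun s : ℝ => p + s • e) := by fun_prop
        simpa using this.tendsto 0
      have := hc.eventually hm
      filter_upwards [this] with s hs
      simpa using hs
  unfold lap
  rw [Fin.sum_univ_two]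
  have := key 0; have := key 1
  linarith

theorem cmp_lemma {ψ : EuclideanSpace ℝ (Fin 2) → ℝ} (hψ : ContDiff ℝ (⊤ : ℕ∞) ψ) (lam r : ℝ)
    (hl : 0 < lam) (hr : 0 < r) (hlr : lam * r^2 ≤ 1) (hlap : ∀ x, lap 2 ψ x = -lam * ψ x)
    (x₀ : EuclideanSpace ℝ (Fin 2)) (hs : ∀ y ∈ sphere x₀ r, 0 < ψ y) :
    ∀ y ∈ closedBall x₀ r, 0 < ψ y := by
  have cψ := hψ.continuous
  obtain ⟨δ, hδ, hδs⟩ : ∃ δ > 0, ∀ y ∈ sphere x₀ r, δ < ψ y := by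
    obtain ⟨z, hz, hmin⟩ := (isCompact_sphere x₀ r).exists_isMinOn
      ((NormedSpace.sphere_nonempty (x := x₀)).2 hr.le) cψ.continuousOn
    refine ⟨ψ z / 2, by have := hs z hz; positivity, fun y hy => ?_⟩
    have := hs z hz
    have : ψ z ≤ ψ y := hmin hy
    linarith
  set w : EuclideanSpace ℝ (Fin 2) → ℝ := fun x => 2 - lam * ‖x - x₀‖^2 with hw
  have hw1 : ∀ y ∈ closedBall x₀ r, 1 ≤ w y := by
    intro y hy
    rw [mem_closedBall, dist_eq_norm] at hy
    have : ‖y - x₀‖^2 ≤ r^2 := by gcongr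
    have := mul_le_mul_of_nonneg_left this hl.le
    simp only [hw]; linarith
  have cw : Continuous w := by fun_prop
  obtain ⟨p, hp, hmin⟩ := (isCompact_closedBall x₀ r).exists_isMinOn
    ⟨x₀, mem_closedBall_self hr.le⟩
    (f := fun y => (ψ y - δ) / w y) (ContinuousOn.div (by fun_prop) cw.continuousOn
      (fun y hy => by have := hw1 y hy; linarith))
  set s := (ψ p - δ) / w p with hsdef
  have hws : ∀ y ∈ closedBall x₀ r, s * w y ≤ ψ y - δ := by
    intro y hy
    have h1 : s ≤ (ψ y - δ) / w y := hmin hy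
    rwa [le_div_iff₀ (by have := hw1 y hy; linarith)] at h1
  have hpeq : s * w p = ψ p - δ := div_mul_cancel₀ _ (by have := hw1 p hp; linarith)
  have hspos : 0 < s := by
    by_contra hc
    push Not at hc
    have hwp := hw1 p hp
    have hpb : p ∈ ball x₀ r := by
      rw [mem_closedBall] at hp
      rw [mem_ball]
      refine lt_of_le_of_ne hp fun h => ?_
      have := hδs p h
      nlinarith
    have hloc : IsLocalMin (fun x => ψ x + s * lam * ‖x - x₀‖^2) p := by
      filter_upwards [isOpen_ball.mem_nhds hpb] with y hy
      have := hws y (ball_subset_closedBall hy)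
      simp only [hw] at this hpeq
      linarith
    have := lap_test hψ _ x₀ p hloc
    rw [hlap] at this
    have hw2 : w p ≤ 2 := by
      simp only [hw]; have : 0 ≤ lam * ‖p - x₀‖^2 := by positivity
      linarith
    have e : -lam * ψ p + 4 * (s * lam) = -(lam * δ) + lam * (s * (4 - w p)) := by
      linear_combination lam * hpeq
    rw [e] at this
    have h1 : s * (4 - w p) ≤ 0 := mul_nonpos_of_nonpos_of_nonneg hc (by linarith)
    have h2 : lam * (s * (4 - w p)) ≤ 0 := mul_nonpos_of_nonneg_of_nonpos hl.le h1
    have : 0 < lam * δ := by positivity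
    linarith
  intro y hy
  have := hws y hy
  have := hw1 y hy
  have : 0 < s * w y := by positivity
  linarith

theorem comp_loc {ψ : EuclideanSpace ℝ (Fin 2) → ℝ} (cψ : Continuous ψ)
    (x y : EuclideanSpace ℝ (Fin 2)) :
    ψ y = 0 ∨ ∀ᶠ w in nhds y, (w ∈ connectedComponentIn {y | ψ y ≠ 0} x ↔
      y ∈ connectedComponentIn {y | ψ y ≠ 0} x) := by
  by_cases h : ψ y = 0
  · exact Or.inl h
  right
  have ho : IsOpen {y | ψ y ≠ 0} := isOpen_ne_fun cψ continuous_const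
  obtain ⟨ε, hε, hb⟩ := Metric.isOpen_iff.1 ho y h
  have hpc : IsPreconnected (ball y ε) := (convex_ball y ε).isPreconnected
  filter_upwards [ball_mem_nhds y hε] with w hw
  constructor
  · intro h1
    rw [connectedComponentIn_eq h1]
    exact hpc.subset_connectedComponentIn hw hb (mem_ball_self hε)
  · intro h1
    rw [connectedComponentIn_eq h1]
    exact hpc.subset_connectedComponentIn (mem_ball_self hε) hb hw

theorem comp_pos {ψ : EuclideanSpace ℝ (Fin 2) → ℝ} (cψ : Continuous ψ)
    (x : EuclideanSpace ℝ (Fin 2)) (hx : 0 < ψ x) :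
    ∀ y ∈ connectedComponentIn {y | ψ y ≠ 0} x, 0 < ψ y := by
  intro y hy
  by_contra hc
  push Not at hc
  have hpc := isPreconnected_connectedComponentIn (F := {y | ψ y ≠ 0}) (x := x)
  obtain ⟨z, hz, hz0⟩ := hpc.intermediate_value hy (mem_connectedComponentIn (by exact hx.ne'))
    cψ.continuousOn ⟨hc, hx.le⟩
  exact connectedComponentIn_subset _ _ hz hz0

/-- polar map -/
def pol (x₀ : EuclideanSpace ℝ (Fin 2)) (z : ℝ × ℝ) : EuclideanSpace ℝ (Fin 2) :=
  x₀ + (Real.exp z.1 * Real.cos z.2) • EuclideanSpace.single 0 (1:ℝ)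
    + (Real.exp z.1 * Real.sin z.2) • EuclideanSpace.single 1 (1:ℝ)

theorem pol_cont (x₀ : EuclideanSpace ℝ (Fin 2)) : Continuous (pol x₀) := by
  unfold pol; fun_prop

theorem pol_dist (x₀ : EuclideanSpace ℝ (Fin 2)) (z : ℝ × ℝ) : dist (pol x₀ z) x₀ = Real.exp z.1 := by
  rw [dist_eq_norm, EuclideanSpace.norm_eq, Fin.sum_univ_two]
  rw [Real.sqrt_eq_iff_mul_self_eq (by positivity) (by positivity)]
  simp [pol, mul_pow]
  linear_combination (Real.exp z.1)^2 * Real.sin_sq_add_cos_sq z.2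

theorem pol_surj (x₀ y : EuclideanSpace ℝ (Fin 2)) (t : ℝ) (h : dist y x₀ = Real.exp t) :
    ∃ θ ∈ Set.Icc 0 (2*π), pol x₀ (t, θ) = y := by
  set w : ℂ := ⟨y 0 - x₀ 0, y 1 - x₀ 1⟩ with hw
  have hn : ‖w‖ = Real.exp t := by
    rw [← h, dist_eq_norm, EuclideanSpace.norm_eq, Fin.sum_univ_two, Complex.norm_def, Complex.normSq_apply]
    congr 1
    simp [hw]; ring
  have h1 : Real.exp t * Real.cos w.arg = y 0 - x₀ 0 := by
    rw [← hn, Complex.norm_mul_cos_arg]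
  have h2 : Real.exp t * Real.sin w.arg = y 1 - x₀ 1 := by
    rw [← hn, Complex.norm_mul_sin_arg]
  have hpi := Real.pi_pos
  have ha := Complex.neg_pi_lt_arg w
  have hb := Complex.arg_le_pi w
  have fin : ∀ θ, Real.cos θ = Real.cos w.arg → Real.sin θ = Real.sin w.arg → pol x₀ (t, θ) = y := by
    intro θ e1 e2
    ext i
    fin_cases i
    · simp [pol, e1, h1]
    · simp [pol, e2, h2]
  by_cases hs : 0 ≤ w.arg
  · exact ⟨w.arg, ⟨hs, by linarith⟩, fin _ rfl rfl⟩
  · push Not at hs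
    exact ⟨w.arg + 2*π, ⟨by linarith, by linarith⟩, fin _ (by simp) (by simp)⟩

theorem pol_chain {f : EuclideanSpace ℝ (Fin 2) → ℝ} (hf : ContDiff ℝ (⊤ : ℕ∞) f)
    (x₀ : EuclideanSpace ℝ (Fin 2)) (a b : ℝ → ℝ) (a' b' s : ℝ) (ha : HasDerivAt a a' s)
    (hb : HasDerivAt b b' s) :
    HasDerivAt (fun s => f (x₀ + a s • EuclideanSpace.single 0 (1:ℝ) + b s • EuclideanSpace.single 1 (1:ℝ)))
      (fderiv ℝ f (x₀ + a s • EuclideanSpace.single 0 (1:ℝ) + b s • EuclideanSpace.single 1 (1:ℝ)) (EuclideanSpace.single 0 (1:ℝ)) * a'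
      + fderiv ℝ f (x₀ + a s • EuclideanSpace.single 0 (1:ℝ) + b s • EuclideanSpace.single 1 (1:ℝ)) (EuclideanSpace.single 1 (1:ℝ)) * b') s := by
  have h1 := ((ha.smul_const (EuclideanSpace.single (0 : Fin 2) (1:ℝ))).const_add x₀).add
    (hb.smul_const (EuclideanSpace.single (1 : Fin 2) (1:ℝ)))
  have h2 := ((hf.differentiable (by simp)) (x₀ + a s • EuclideanSpace.single 0 (1:ℝ) + b s • EuclideanSpace.single 1 (1:ℝ))).hasFDerivAt.comp_hasDerivAt s h1
  refine h2.congr_deriv ?_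
  rw [map_add, map_smul, map_smul]
  simp [mul_comm]

theorem pol_dt {f : EuclideanSpace ℝ (Fin 2) → ℝ} (hf : ContDiff ℝ (⊤ : ℕ∞) f)
    (x₀ : EuclideanSpace ℝ (Fin 2)) (t θ : ℝ) :
    HasDerivAt (fun t => f (pol x₀ (t, θ)))
      (fderiv ℝ f (pol x₀ (t, θ)) (EuclideanSpace.single 0 (1:ℝ)) * (Real.exp t * Real.cos θ)
      + fderiv ℝ f (pol x₀ (t, θ)) (EuclideanSpace.single 1 (1:ℝ)) * (Real.exp t * Real.sin θ)) t :=
  pol_chain hf x₀ (fun t => Real.exp t * Real.cos θ) (fun t => Real.exp t * Real.sin θ) _ _ t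
    ((Real.hasDerivAt_exp t).mul_const _) ((Real.hasDerivAt_exp t).mul_const _)

theorem pol_dq {f : EuclideanSpace ℝ (Fin 2) → ℝ} (hf : ContDiff ℝ (⊤ : ℕ∞) f)
    (x₀ : EuclideanSpace ℝ (Fin 2)) (t θ : ℝ) :
    HasDerivAt (fun θ => f (pol x₀ (t, θ)))
      (fderiv ℝ f (pol x₀ (t, θ)) (EuclideanSpace.single 0 (1:ℝ)) * (Real.exp t * -Real.sin θ)
      + fderiv ℝ f (pol x₀ (t, θ)) (EuclideanSpace.single 1 (1:ℝ)) * (Real.exp t * Real.cos θ)) θ :=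
  pol_chain hf x₀ (fun θ => Real.exp t * Real.cos θ) (fun θ => Real.exp t * Real.sin θ) _ _ θ
    ((Real.hasDerivAt_cos θ).const_mul _) ((Real.hasDerivAt_sin θ).const_mul _)

theorem core_lemma {ψ : EuclideanSpace ℝ (Fin 2) → ℝ} (hψ : ContDiff ℝ (⊤ : ℕ∞) ψ) (lam T0 : ℝ)
    (hl : 0 < lam) (hT : 2 * lam * Real.exp (2*T0) = 1) (hlap : ∀ x, lap 2 ψ x = -lam * ψ x)
    (x₀ : EuclideanSpace ℝ (Fin 2)) (hx : 0 < ψ x₀)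
    (hmax : ∀ y ∈ connectedComponentIn {y | ψ y ≠ 0} x₀, ψ y ≤ ψ x₀) :
    ball x₀ (Real.exp (T0 - 11)) ⊆ connectedComponentIn {y | ψ y ≠ 0} x₀ := by
  classical
  have cψ := hψ.continuous
  set Ω := connectedComponentIn {y | ψ y ≠ 0} x₀ with hΩ
  have hxΩ : x₀ ∈ Ω := mem_connectedComponentIn (by exact hx.ne')
  have hpos := comp_pos cψ x₀ hx
  by_contra hnot
  obtain ⟨y, hyb, hyΩ⟩ := Set.not_subset.1 hnot
  set e0 : EuclideanSpace ℝ (Fin 2) := EuclideanSpace.single 0 (1:ℝ) with he0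
  set e1 : EuclideanSpace ℝ (Fin 2) := EuclideanSpace.single 1 (1:ℝ) with he1
  set f0 := fun y => fderiv ℝ ψ y e0 with hf0
  set f1 := fun y => fderiv ℝ ψ y e1 with hf1
  have s0 : ContDiff ℝ (⊤ : ℕ∞) f0 := partial_contDiff hψ e0
  have s1 : ContDiff ℝ (⊤ : ℕ∞) f1 := partial_contDiff hψ e1
  set f00 := fun y => fderiv ℝ f0 y e0 with hf00
  set f01 := fun y => fderiv ℝ f0 y e1 with hf01
  set f10 := fun y => fderiv ℝ f1 y e0 with hf10
  set f11 := fun y => fderiv ℝ f1 y e1 with hf11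
  have c0 := s0.continuous
  have c1 := s1.continuous
  have c00 : Continuous f00 := (partial_contDiff s0 e0).continuous
  have c01 : Continuous f01 := (partial_contDiff s0 e1).continuous
  have c10 : Continuous f10 := (partial_contDiff s1 e0).continuous
  have c11 : Continuous f11 := (partial_contDiff s1 e1).continuous
  have cP := pol_cont x₀
  set P := pol x₀ with hP
  set X : ℝ × ℝ → ℝ := fun z => Real.exp z.1 * Real.cos z.2 with hX
  set Y : ℝ × ℝ → ℝ := fun z => Real.exp z.1 * Real.sin z.2 with hY
  have cX : Continuous X := by fun_prop
  have cY : Continuous Y := by fun_prop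
  set u : EuclideanSpace ℝ (Fin 2) → ℝ := fun y => if y ∈ Ω then 1 else 0 with hu
  have uloc : ∀ y, ψ y = 0 ∨ ∀ᶠ w in nhds y, u w = u y := by
    intro y
    refine (comp_loc cψ x₀ y).imp id fun h => ?_
    filter_upwards [h] with w hw
    simp only [hu, hΩ, hw]
  have u01 : ∀ y, u y = 0 ∨ u y = 1 := by
    intro y; by_cases h : y ∈ Ω <;> simp [hu, h]
  have cyl := cyl_lemma (fun z => ψ (P z)) (fun z => f0 (P z) * X z + f1 (P z) * Y z)
    (fun z => (f00 (P z) * X z + f01 (P z) * Y z) * X z + f0 (P z) * X z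
      + ((f10 (P z) * X z + f11 (P z) * Y z) * Y z + f1 (P z) * Y z))
    (fun z => f0 (P z) * (-Y z) + f1 (P z) * X z)
    (fun z => (f00 (P z) * (-Y z) + f01 (P z) * X z) * (-Y z) + f0 (P z) * (-X z)
      + ((f10 (P z) * (-Y z) + f11 (P z) * X z) * X z + f1 (P z) * (-Y z)))
    (fun z => u (P z)) lam (ψ x₀ ^ 4) (T0 - 11) T0 (by fun_prop) (by fun_prop) (by fun_prop)
    (by fun_prop) (by fun_prop) ?_ ?_ ?_ ?_ ?_ ?_ ?_ ?_ ?_ ?_ (by positivity) hl ?_ ?_ ?_ hT (by linarith)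
  · have := Real.pi_lt_d2
    have := Real.pi_pos
    nlinarith
  · intro t θ
    exact pol_dt hψ x₀ t θ
  · intro t θ
    exact ((pol_dt s0 x₀ t θ).mul ((Real.hasDerivAt_exp t).mul_const (Real.cos θ))).add
      ((pol_dt s1 x₀ t θ).mul ((Real.hasDerivAt_exp t).mul_const (Real.sin θ)))
  · intro t θ
    refine (pol_dq hψ x₀ t θ).congr_deriv ?_
    simp only [hX, hY, hf0, hf1]; ring
  · intro t θ
    refine (((pol_dq s0 x₀ t θ).mul ((Real.hasDerivAt_sin θ).const_mul (Real.exp t)).neg).add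
      ((pol_dq s1 x₀ t θ).mul ((Real.hasDerivAt_cos θ).const_mul (Real.exp t)))).congr_deriv ?_
    simp only [hX, hY, hf00, hf01, hf10, hf11, Pi.neg_apply]; ring
  · intro z; exact u01 _
  · intro z
    exact (uloc (P z)).imp id fun h => (cP.tendsto z).eventually h
  · intro t; simp [hP, pol]
  · intro t; simp [hP, pol, hX, hY]
  · intro t; simp [hP, pol]
  · intro t θ
    have h1 := hlap (P (t, θ))
    unfold lap at h1
    rw [Fin.sum_univ_two] at h1
    change f00 (P (t, θ)) + f11 (P (t, θ)) = _ at h1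
    have h2 : X (t, θ)^2 + Y (t, θ)^2 = Real.exp (2*t) := by
      simp only [hX, hY]
      rw [show 2 * t = t + t by ring, Real.exp_add]
      linear_combination (Real.exp t)^2 * Real.sin_sq_add_cos_sq θ
    rw [← h2]
    linear_combination (X (t, θ)^2 + Y (t, θ)^2) * h1
  · intro z
    by_cases h : P z ∈ Ω
    · simp only [hu, h, if_true, mul_one]
      have := hmax _ h; have := hpos _ h
      gcongr
    · simp only [hu, h, if_false, mul_zero]; positivity
  · intro δ hδ
    have hc : ∀ᶠ y in nhds x₀, ψ x₀ ^ 4 - δ < ψ y ^ 4 :=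
      (cψ.pow 4).continuousAt.eventually (lt_mem_nhds (by simp; linarith))
    have hu1 : ∀ᶠ y in nhds x₀, u y = u x₀ := (uloc x₀).resolve_left hx.ne'
    obtain ⟨ε, hε, hb⟩ := Metric.eventually_nhds_iff.1 (hc.and hu1)
    refine ⟨Real.log (ε/2), fun t ht θ => ?_⟩
    have hd : dist (P (t, θ)) x₀ < ε := by
      rw [hP, pol_dist]
      have : Real.exp t ≤ ε/2 := (Real.le_log_iff_exp_le (by positivity)).1 ht
      linarith
    obtain ⟨h1, h2⟩ := hb hd
    have h3 : u x₀ = 1 := by simp [hu, hxΩ]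
    rw [h2, h3, mul_one]
    exact h1.le
  · intro t h1 h2
    by_contra hc
    push Not at hc
    have hsub : ∀ w ∈ sphere x₀ (Real.exp t), 0 < ψ w := by
      intro w hw
      obtain ⟨θ, hθ, hw2⟩ := pol_surj x₀ w t hw
      have := hc θ hθ
      apply hpos
      by_contra hnw
      apply this
      simp only [hu, hP, hw2, ite_eq_right_iff]
      exact fun h => absurd h hnw
    have hexp : lam * (Real.exp t)^2 ≤ 1 := by
      have : (Real.exp t)^2 ≤ Real.exp (2*T0) := by
        rw [← Real.exp_nat_mul]; exact Real.exp_le_exp.2 (by push_cast; linarith)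
      have := mul_le_mul_of_nonneg_left this hl.le
      linarith
    have hp := cmp_lemma hψ lam (Real.exp t) hl (Real.exp_pos t) hexp hlap x₀ hsub
    have hin : closedBall x₀ (Real.exp t) ⊆ Ω :=
      (convex_closedBall x₀ _).isPreconnected.subset_connectedComponentIn
        (mem_closedBall_self (Real.exp_pos t).le) (fun w hw => (hp w hw).ne')
    apply hyΩ
    apply hin
    rw [mem_ball] at hyb
    rw [mem_closedBall]
    exact hyb.le.trans (Real.exp_le_exp.2 h1)

/-- integer translation vector -/
def tv (v : Fin 2 → ℤ) : EuclideanSpace ℝ (Fin 2) := WithLp.toLp 2 fun i => (v i : ℝ)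

theorem tv_add (v w : Fin 2 → ℤ) : tv (v + w) = tv v + tv w := by
  ext i; simp [tv]

theorem tv_neg (v : Fin 2 → ℤ) : tv (-v) = - tv v := by
  ext i; simp [tv]

theorem per_tv {ψ : EuclideanSpace ℝ (Fin 2) → ℝ} (h : ZnPeriodic 2 ψ)
    (x : EuclideanSpace ℝ (Fin 2)) (v : Fin 2 → ℤ) : ψ (x + tv v) = ψ x := h x v

theorem exists_max_per (g : EuclideanSpace ℝ (Fin 2) → ℝ) (hg : Continuous g)
    (hp : ∀ x v, g (x + tv v) = g x) : ∃ z, ∀ y, g y ≤ g z := by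
  have hK : IsCompact ((WithLp.toLp 2 : (Fin 2 → ℝ) → EuclideanSpace ℝ (Fin 2)) '' Set.Icc 0 1) :=
    isCompact_Icc.image (PiLp.continuous_toLp 2 _)
  obtain ⟨z, _, hz⟩ := hK.exists_isMaxOn ⟨_, 0, ⟨le_rfl, zero_le_one⟩, rfl⟩ hg.continuousOn
  refine ⟨z, fun y => ?_⟩
  rw [← hp y (fun i => -⌊y i⌋)]
  refine hz ⟨fun i => y i - ⌊y i⌋, ⟨fun i => ?_, fun i => ?_⟩, ?_⟩
  · simpa using Int.floor_le (y i)
  · have := Int.lt_floor_add_one (y i)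
    simp only [Pi.one_apply]; linarith
  · ext i; simp [tv, sub_eq_add_neg]

theorem exists_ball_pos {ψ : EuclideanSpace ℝ (Fin 2) → ℝ} (hψ : ContDiff ℝ (⊤ : ℕ∞) ψ) (lam T0 : ℝ)
    (hl : 0 < lam) (hT : 2 * lam * Real.exp (2*T0) = 1) (hlap : ∀ x, lap 2 ψ x = -lam * ψ x)
    (hper : ZnPeriodic 2 ψ) (x : EuclideanSpace ℝ (Fin 2)) (hx : 0 < ψ x) :
    ∃ c, ball c (Real.exp (T0 - 11)) ⊆ connectedComponentIn {y | ψ y ≠ 0} x := by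
  classical
  have cψ := hψ.continuous
  have hp := per_tv hper
  set Ω := connectedComponentIn {y | ψ y ≠ 0} x with hΩ
  have hxΩ : x ∈ Ω := mem_connectedComponentIn (by exact hx.ne')
  set U : Set (EuclideanSpace ℝ (Fin 2)) := {y | ∃ v, y + tv v ∈ Ω} with hU
  have hUper : ∀ y w, y + tv w ∈ U ↔ y ∈ U := by
    intro y w
    constructor
    · rintro ⟨v, hv⟩
      exact ⟨w + v, by rwa [tv_add, ← add_assoc]⟩
    · rintro ⟨v, hv⟩
      refine ⟨-w + v, ?_⟩
      rw [tv_add, tv_neg]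
      rwa [show y + tv w + (-tv w + tv v) = y + tv v by abel]
  have hΩU : ∀ y ∈ Ω, y ∈ U := fun y hy => ⟨0, by
    have : tv 0 = 0 := by ext i; simp [tv]
    rwa [this, add_zero]⟩
  set u : EuclideanSpace ℝ (Fin 2) → ℝ := fun y => if y ∈ U then 1 else 0 with hu
  have ho : IsOpen {y | ψ y ≠ 0} := isOpen_ne_fun cψ continuous_const
  have cg : Continuous (fun y => ψ y * u y) := by
    refine continuous_mul_chi cψ (fun y => ?_) (fun y => ?_)
    · by_cases h : y ∈ U <;> simp [hu, h]
    by_cases h : ψ y = 0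
    · exact Or.inl h
    right
    obtain ⟨ε, hε, hb⟩ := Metric.isOpen_iff.1 ho y h
    have mv : ∀ a ∈ ball y ε, ∀ b ∈ ball y ε, a ∈ U → b ∈ U := by
      rintro a ha b hb' ⟨v, hv⟩
      refine ⟨v, ?_⟩
      have himg : IsPreconnected ((fun q => q + tv v) '' ball y ε) :=
        (convex_ball y ε).isPreconnected.image _ (by fun_prop)
      rw [hΩ, connectedComponentIn_eq hv]
      refine himg.subset_connectedComponentIn ⟨a, ha, rfl⟩ ?_ ⟨b, hb', rfl⟩
      rintro _ ⟨q, hq, rfl⟩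
      have := hb hq
      simp only [Set.mem_setOf_eq] at this ⊢
      rwa [hp]
    filter_upwards [ball_mem_nhds y hε] with w hw
    have : w ∈ U ↔ y ∈ U := ⟨mv w hw y (mem_ball_self hε), mv y (mem_ball_self hε) w hw⟩
    simp only [hu, this]
  obtain ⟨z, hz⟩ := exists_max_per _ cg (fun y v => by simp only [hp, hu, hUper])
  have gx : ∀ y ∈ Ω, ψ y * u y = ψ y := fun y hy => by simp [hu, hΩU y hy]
  have hgz : 0 < ψ z * u z := by
    have := hz x
    simp only [gx x hxΩ] at this
    linarith
  have hzU : z ∈ U := by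
    by_contra h
    simp [hu, h] at hgz
  have huz : u z = 1 := by simp [hu, hzU]
  rw [huz, mul_one] at hgz
  obtain ⟨v, hv⟩ := hzU
  have hcc : Ω = connectedComponentIn {y | ψ y ≠ 0} (z + tv v) := connectedComponentIn_eq hv
  refine ⟨z + tv v, ?_⟩
  rw [hcc]
  refine core_lemma hψ lam T0 hl hT hlap (z + tv v) (by rwa [hp]) ?_
  intro y hy
  rw [← hcc] at hy
  have := hz y
  rw [hp]
  simpa only [gx y hy, huz, mul_one] using this

theorem ball_bdd {ψ : EuclideanSpace ℝ (Fin 2) → ℝ} (hψ : ContDiff ℝ (⊤ : ℕ∞) ψ) (lam : ℝ)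
    (hl : 0 < lam) (hlap : ∀ x, lap 2 ψ x = -lam * ψ x)
    (hper : ZnPeriodic 2 ψ) (x : EuclideanSpace ℝ (Fin 2)) (hx : 0 < ψ x)
    (c : EuclideanSpace ℝ (Fin 2)) (ρ : ℝ)
    (h : ball c ρ ⊆ connectedComponentIn {y | ψ y ≠ 0} x) : ρ ≤ 2 := by
  by_contra hc
  push Not at hc
  have cψ := hψ.continuous
  have hp := per_tv hper
  have hall : ∀ y, 0 < ψ y := by
    intro y
    rw [← hp y (fun i => -⌊y i - c i⌋)]
    apply comp_pos cψ x hx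
    apply h
    rw [mem_ball, dist_eq_norm]
    refine lt_of_le_of_lt ?_ hc
    rw [EuclideanSpace.norm_eq, Fin.sum_univ_two, Real.sqrt_le_left (by norm_num)]
    have key : ∀ i : Fin 2, ‖(y + tv (fun i => -⌊y i - c i⌋) - c) i‖^2 ≤ 1 := by
      intro i
      have h1 := Int.floor_le (y i - c i)
      have h2 := Int.lt_floor_add_one (y i - c i)
      have e : (y + tv (fun i => -⌊y i - c i⌋) - c) i = y i - c i - ⌊y i - c i⌋ := by
        simp only [tv, PiLp.sub_apply, PiLp.add_apply, Int.cast_neg]; ring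
      rw [e, Real.norm_eq_abs, sq_abs]
      nlinarith
    have := key 0; have := key 1
    linarith
  obtain ⟨z, hz⟩ := exists_max_per (fun y => - ψ y) (by fun_prop) (fun y v => by simp only [hp])
  have hm : IsLocalMin (fun w => ψ w + 0 * ‖w - z‖^2) z := by
    filter_upwards with w
    have := hz w
    simp only [zero_mul, add_zero]; linarith
  have := lap_test hψ 0 z z hm
  rw [hlap] at this
  have := mul_pos hl (hall z)
  linarith

theorem inner_pos {ψ : EuclideanSpace ℝ (Fin 2) → ℝ} (hψ : ContDiff ℝ (⊤ : ℕ∞) ψ) (lam : ℝ)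
    (hl : 0 < lam) (hlap : ∀ x, lap 2 ψ x = -lam * ψ x)
    (hper : ZnPeriodic 2 ψ) (x : EuclideanSpace ℝ (Fin 2)) (hx : 0 < ψ x) :
    (Real.exp (-11) * (2:ℝ) ^ (-(1:ℝ)/2)) * lam ^ (-(1:ℝ)/2)
      ≤ innerRadius (connectedComponentIn {y | ψ y ≠ 0} x) := by
  set T0 := Real.log (2*lam) * (-(1:ℝ)/2) with hT0
  have hT : 2 * lam * Real.exp (2*T0) = 1 := by
    rw [hT0, show 2 * (Real.log (2*lam) * (-(1:ℝ)/2)) = - Real.log (2*lam) by ring, Real.exp_neg,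
      Real.exp_log (by positivity)]
    exact mul_inv_cancel₀ (by positivity)
  have e : (Real.exp (-11) * (2:ℝ) ^ (-(1:ℝ)/2)) * lam ^ (-(1:ℝ)/2) = Real.exp (T0 - 11) := by
    rw [mul_assoc, ← Real.mul_rpow (by norm_num) hl.le, Real.rpow_def_of_pos (by positivity),
      ← Real.exp_add]
    congr 1; rw [hT0]; ring
  rw [e]
  obtain ⟨c, hc⟩ := exists_ball_pos hψ lam T0 hl hT hlap hper x hx
  refine le_csSup ⟨2, ?_⟩ ⟨Real.exp_pos _, c, hc⟩
  rintro ρ ⟨_, c', hc'⟩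
  exact ball_bdd hψ lam hl hlap hper x hx c' ρ hc'

theorem lap_neg (ψ : EuclideanSpace ℝ (Fin 2) → ℝ) (x : EuclideanSpace ℝ (Fin 2)) :
    lap 2 (fun y => - ψ y) x = - lap 2 ψ x := by
  unfold lap
  rw [← Finset.sum_neg_distrib]
  refine Finset.sum_congr rfl fun i _ => ?_
  have : (fun y => fderiv ℝ (fun y => - ψ y) y (EuclideanSpace.single i (1:ℝ)))
      = fun y => - (fderiv ℝ ψ y (EuclideanSpace.single i (1:ℝ))) := by
    funext y
    rw [fderiv_fun_neg]; rfl
  rw [this, fderiv_fun_neg]; rfl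

theorem inner_radius_lower_bound_dim_two :
    ∃ a₁ : ℝ, 0 < a₁ ∧
      ∀ (ψ : EuclideanSpace ℝ (Fin 2) → ℝ) (lam : ℝ),
        1 ≤ lam → ContDiff ℝ (⊤ : ℕ∞) ψ → ZnPeriodic 2 ψ →
        (∀ x, lap 2 ψ x = -lam * ψ x) →
        ∀ Ω, IsNodalDomain ψ Ω →
          a₁ * lam ^ (-(1:ℝ)/2) ≤ innerRadius Ω := by
  refine ⟨Real.exp (-11) * (2:ℝ) ^ (-(1:ℝ)/2), by positivity, ?_⟩
  rintro ψ lam hlam hψ hper hlap Ω ⟨x, hx, rfl⟩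
  have hl : 0 < lam := by linarith
  rcases lt_or_gt_of_ne hx with h | h
  · have := inner_pos (ψ := fun y => - ψ y) hψ.neg lam hl
      (fun y => by rw [lap_neg, hlap]; ring) (fun y v => by
        have := hper y v
        simp only [neg_inj]; exact this) x (by simpa using h)
    simpa only [ne_eq, neg_eq_zero] using this
  · exact inner_pos hψ lam hl hlap hper x h
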